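/- arXiv:2408.06573 — 7 statements merged into one kernel-verified Lean document; each statement's English description precedes it below -/
import Mathlib

section
/- Let A be a complex unital Banach algebra and let x ∈ A be such that the spectrum σ(x) has exactly n connected components (i.e., the set of connected components of σ(x) is finite with cardinality n). Then there exists ε > 0 such that every y ∈ A with ‖x − y‖ < ε has the property that σ(y) has at least n connected components (i.e., there exist n pairwise disjoint open subsets of ℂ, each meeting σ(y), whose union contains σ(y)). -/
/-!
The crux is that an isolated part of `σ(x)` cannot disappear under a small perturbation
(`eventually_spectrum_inter_nonempty`). Let `V` be a bounded open set whose frontier misses `σ(x)`.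
The resolvents of all `y` near `x` are bounded on the compact set `∂V` by a common constant `M`. If
such a `y` had no spectrum in `V`, its resolvent would be holomorphic on `V`, hence bounded by `M`
on all of `V` by the maximum modulus principle. At a point `z ∈ σ(x) ∩ V` this makes `z - y`
invertible with an inverse of norm at most `M`, so `z - x` is invertible once `‖x - y‖ M < 1`, a
contradiction. No holomorphic functional calculus is needed.

Finitely many components of the compact set `σ(x)` are pairwise disjoint closed sets, and
`exists_disjoint_open_nhds` puts them into disjoint bounded open sets. These meet `σ(y)` by the
above and cover `σ(y)` by upper hemicontinuity of the spectrum.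
-/

open Topology Filter Set

/-- Locally uniform boundedness of the resolvent: off `σ(x)`, a bound on a compact set persists for
all elements near `x`. -/
lemma eventually_resolvent_bound {A : Type*} [NormedRing A] [NormedAlgebra ℂ A] [CompleteSpace A]
    (x : A) {K : Set ℂ} (hK : IsCompact K) (hd : Disjoint K (spectrum ℂ x)) :
    ∃ M : ℝ, ∀ᶠ y in 𝓝 x, ∀ z ∈ K, z ∈ resolventSet ℂ y ∧ ‖resolvent y z‖ ≤ M := by
  have hunit : ∀ z ∈ K, IsUnit (algebraMap ℂ A z - x) := fun z hz =>
    spectrum.notMem_iff.1 (hd.notMem_of_mem_left hz)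
  have hsub : Continuous (fun p : A × ℂ => algebraMap ℂ A p.2 - p.1) :=
    ((continuous_algebraMap ℂ A).comp continuous_snd).sub continuous_fst
  have hcont : ∀ z ∈ K, ContinuousAt
      (fun p : A × ℂ => Ring.inverse (algebraMap ℂ A p.2 - p.1)) (x, z) := by
    intro z hz
    obtain ⟨u, hu⟩ := hunit z hz
    have h1 : ContinuousAt Ring.inverse (algebraMap ℂ A z - x) :=
      hu ▸ NormedRing.inverse_continuousAt u
    exact ContinuousAt.comp (x := (x, z)) (f := fun p : A × ℂ => algebraMap ℂ A p.2 - p.1) h1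
      hsub.continuousAt
  have hc : ContinuousOn (fun z => resolvent x z) K := fun z hz =>
    (ContinuousAt.comp (f := fun z : ℂ => (x, z)) (hcont z hz) (by fun_prop)).continuousWithinAt
  obtain ⟨C, hC⟩ := hK.exists_bound_of_continuousOn hc
  refine ⟨C + 1, hK.eventually_forall_of_forall_eventually fun z hz => ?_⟩
  have h1 : ∀ᶠ p : A × ℂ in 𝓝 (x, z), IsUnit (algebraMap ℂ A p.2 - p.1) :=
    (hsub.continuousAt (x := (x, z))).eventually_mem (Units.isOpen.mem_nhds (hunit z hz))
  have h2 : ∀ᶠ p : A × ℂ in 𝓝 (x, z), ‖Ring.inverse (algebraMap ℂ A p.2 - p.1)‖ < C + 1 :=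
    (hcont z hz).norm.eventually_lt_const (lt_of_le_of_lt (hC z hz) (lt_add_one C))
  filter_upwards [h1, h2] with p hp1 hp2
  exact ⟨hp1, hp2.le⟩

/-- Persistence of an isolated part of the spectrum. -/
lemma eventually_spectrum_inter_nonempty {A : Type*} [NormedRing A] [NormedAlgebra ℂ A]
    [CompleteSpace A] (x : A) {V : Set ℂ} (hVb : Bornology.IsBounded V)
    (hfr : Disjoint (frontier V) (spectrum ℂ x)) (hne : (spectrum ℂ x ∩ V).Nonempty) :
    ∀ᶠ y in 𝓝 x, (spectrum ℂ y ∩ V).Nonempty := by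
  have hKc : IsCompact (frontier V) :=
    Metric.isCompact_of_isClosed_isBounded isClosed_frontier
      (hVb.closure.subset frontier_subset_closure)
  obtain ⟨M, hM⟩ := eventually_resolvent_bound x hKc hfr
  obtain ⟨z, hzx, hzV⟩ := hne
  have hsmall : ∀ᶠ y in 𝓝 x, M * ‖x - y‖ < 1 :=
    (Continuous.continuousAt (f := fun y => M * ‖x - y‖) (by fun_prop)).eventually_lt_const
      (by simp)
  filter_upwards [hM, hsmall] with y hyM hy
  by_contra hempty
  have hcl : ∀ w ∈ closure V, w ∈ resolventSet ℂ y := by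
    intro w hw
    rw [closure_eq_self_union_frontier] at hw
    rcases hw with hw | hw
    · by_contra hn
      exact hempty ⟨w, hn, hw⟩
    · exact (hyM w hw).1
  have hdiff : DiffContOnCl ℂ (resolvent y) V :=
    DifferentiableOn.diffContOnCl fun w hw =>
      (spectrum.hasDerivAt_resolvent_const_left (hcl w hw)).differentiableAt.differentiableWithinAt
  have hzcl := subset_closure hzV
  have hbound : ‖resolvent y z‖ ≤ M :=
    Complex.norm_le_of_forall_mem_frontier_norm_le hVb hdiff (fun w hw => (hyM w hw).2) hzcl
  have hu : IsUnit (algebraMap ℂ A z - y) := hcl z hzcl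
  have hone : IsUnit (1 - resolvent y z * (x - y)) := by
    apply isUnit_one_sub_of_norm_lt_one
    calc ‖resolvent y z * (x - y)‖ ≤ ‖resolvent y z‖ * ‖x - y‖ := norm_mul_le _ _
      _ ≤ M * ‖x - y‖ := by gcongr
      _ < 1 := hy
  have hprod : (algebraMap ℂ A z - y) * (1 - resolvent y z * (x - y)) = algebraMap ℂ A z - x := by
    rw [mul_sub, ← mul_assoc, resolvent, Ring.mul_inverse_cancel _ hu]
    noncomm_ring
  exact spectrum.mem_iff.1 hzx (hprod ▸ hu.mul hone)

/-- The witnesses are `{z | d(z, K i) < d(z, K j) for all j ≠ i}`. -/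
lemma exists_disjoint_open_nhds {X ι : Type*} [PseudoMetricSpace X] [Finite ι] (K : ι → Set X)
    (hcl : ∀ i, IsClosed (K i)) (hne : ∀ i, (K i).Nonempty)
    (hdisj : Pairwise (Function.onFun Disjoint K)) :
    ∃ U : ι → Set X, (∀ i, IsOpen (U i)) ∧ Pairwise (Function.onFun Disjoint U) ∧
      ∀ i, K i ⊆ U i := by
  refine ⟨fun i => ⋂ j, {z | j ≠ i → Metric.infDist z (K i) < Metric.infDist z (K j)}, ?_, ?_, ?_⟩
  · refine fun i => isOpen_iInter_of_finite fun j => ?_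
    by_cases h : j = i
    · simp [h]
    · simpa [h] using isOpen_lt (Metric.continuous_infDist_pt (K i))
        (Metric.continuous_infDist_pt (K j))
  · intro i j hij
    refine Set.disjoint_left.2 fun z hi hj => ?_
    exact lt_asymm (mem_iInter.1 hi j hij.symm) (mem_iInter.1 hj i hij)
  · intro i z hz
    refine mem_iInter.2 fun j hj => ?_
    rw [Metric.infDist_zero_of_mem hz]
    exact ((hcl j).notMem_iff_infDist_pos (hne j)).1 ((hdisj hj).notMem_of_mem_right hz)

/-- If the spectrum of an element `x` of a complex unital Banach algebra has exactly `n`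
connected components, then every `y` close enough to `x` has spectrum with at least `n`
connected components. -/
theorem spectrum_components_lower_semicontinuous
    {A : Type*} [NormedRing A] [NormedAlgebra ℂ A] [CompleteSpace A]
    (x : A) (n : ℕ)
    (hfin : Finite (ConnectedComponents ↥(spectrum ℂ x)))
    (hn : Nat.card (ConnectedComponents ↥(spectrum ℂ x)) = n) :
    ∃ ε > 0, ∀ y : A, ‖x - y‖ < ε →
      ∃ U : Fin n → Set ℂ, (∀ i, IsOpen (U i)) ∧
        Pairwise (Function.onFun Disjoint U) ∧
        (∀ i, (spectrum ℂ y ∩ U i).Nonempty) ∧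
        spectrum ℂ y ⊆ ⋃ i, U i := by
  let e : Fin n ≃ ConnectedComponents (spectrum ℂ x) := (Finite.equivFinOfCardEq hn).symm
  have hcomp : IsCompact (spectrum ℂ x) := spectrum.isCompact x
  have : CompactSpace (spectrum ℂ x) := isCompact_iff_compactSpace.1 hcomp
  let K : Fin n → Set ℂ := fun i =>
    Subtype.val '' ((ConnectedComponents.mk : spectrum ℂ x → _) ⁻¹' {e i})
  have hKcl : ∀ i, IsClosed (K i) := fun i =>
    (spectrum.isClosed x).isClosedEmbedding_subtypeVal.isClosedMap _
      (isClosed_singleton.preimage ConnectedComponents.continuous_coe)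
  have hKne : ∀ i, (K i).Nonempty := by
    intro i
    obtain ⟨w, hw⟩ := ConnectedComponents.surjective_coe (e i)
    exact ⟨w, w, hw, rfl⟩
  have hKsub : ∀ i, K i ⊆ spectrum ℂ x := by
    rintro i _ ⟨w, -, rfl⟩
    exact w.2
  have hKcov : ∀ z ∈ spectrum ℂ x, ∃ i, z ∈ K i := fun z hz =>
    ⟨e.symm (ConnectedComponents.mk ⟨z, hz⟩), ⟨z, hz⟩, by simp, rfl⟩
  have hKd : Pairwise (Function.onFun Disjoint K) := by
    intro i j hij
    refine Set.disjoint_left.2 ?_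
    rintro _ ⟨w, hw, rfl⟩ ⟨w', hw', h⟩
    obtain rfl : w' = w := Subtype.ext h
    exact hij (e.injective (hw.symm.trans hw'))
  obtain ⟨U₀, hU₀o, hU₀d, hU₀K⟩ := exists_disjoint_open_nhds K hKcl hKne hKd
  obtain ⟨R, hR⟩ := hcomp.isBounded.subset_ball (0 : ℂ)
  -- The maximum modulus principle needs bounded sets.
  let U : Fin n → Set ℂ := fun i => U₀ i ∩ Metric.ball 0 R
  have hUo : ∀ i, IsOpen (U i) := fun i => (hU₀o i).inter Metric.isOpen_ball
  have hUd : Pairwise (Function.onFun Disjoint U) := fun i j hij =>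
    (hU₀d hij).mono inter_subset_left inter_subset_left
  have hUK : ∀ i, K i ⊆ U i := fun i => subset_inter (hU₀K i) ((hKsub i).trans hR)
  have hUcov : spectrum ℂ x ⊆ ⋃ i, U i := fun z hz =>
    let ⟨i, hi⟩ := hKcov z hz
    mem_iUnion.2 ⟨i, hUK i hi⟩
  have hfr : ∀ i, Disjoint (frontier (U i)) (spectrum ℂ x) := by
    intro i
    refine Set.disjoint_left.2 fun z hz hzx => ?_
    obtain ⟨j, hj⟩ := mem_iUnion.1 (hUcov hzx)
    rw [(hUo i).frontier_eq] at hz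
    rcases eq_or_ne i j with rfl | hij
    · exact hz.2 hj
    · exact ((hUd hij).closure_left (hUo j)).notMem_of_mem_left hz.1 hj
  have hmeet : ∀ᶠ y in 𝓝 x, ∀ i, (spectrum ℂ y ∩ U i).Nonempty :=
    eventually_all.2 fun i => eventually_spectrum_inter_nonempty x
      (Metric.isBounded_ball.subset inter_subset_right) (hfr i)
      ((hKne i).mono (subset_inter (hKsub i) (hUK i)))
  have hcover : ∀ᶠ y in 𝓝 x, spectrum ℂ y ⊆ ⋃ i, U i :=
    ((upperHemicontinuous_spectrum ℂ A).upperHemicontinuousAt x _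
      ((isOpen_iUnion hUo).mem_nhdsSet.2 hUcov)).mono fun y hy => subset_of_mem_nhdsSet hy
  obtain ⟨ε, hε, h⟩ := Metric.eventually_nhds_iff.1 (hmeet.and hcover)
  refine ⟨ε, hε, fun y hy => ?_⟩
  have hy' := h (y := y) (by rwa [dist_comm, dist_eq_norm])
  exact ⟨U, hUo, hUd, hy'.1, hy'.2⟩
end

section
/- Let μ be a Borel probability measure on ℝ and let G_μ(z) = ∫_ℝ (z − t)⁻¹ dμ(t) for z ∈ ℍ. Then |λ|² · ∫_ℝ |(λ − t)⁻¹ − G_μ(λ)|² dμ(t) → 0 as λ → ∞ nontangentially; that is, for every C > 0 and ε > 0 there exists R > 0 such that |λ|² · ∫_ℝ |(λ − t)⁻¹ − G_μ(λ)|² dμ(t) < ε whenever λ ∈ ℍ, |λ| > R, and |Re λ| ≤ C·Im λ. -/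
open MeasureTheory

/-!
In the sector `|Re l| ≤ C * Im l` the rescaled resolvents `l * (l - t)⁻¹` are bounded by `C + 1`
uniformly in `t`, and they tend to `1` for each fixed `t` as `l → ∞`. Dominated convergence gives
`l * G_μ(l) → 1`; hence `l * ((l - t)⁻¹ - G_μ(l)) → 0` for each `t`, still uniformly bounded, and a
second application of dominated convergence gives the claim.
-/

open Filter Topology

/-- The part of the upper half-plane where `|Re l| ≤ C * Im l`. -/
def nontangentialSector (C : ℝ) : Set ℂ := {l | 0 < l.im ∧ |l.re| ≤ C * l.im}

/-- The filter of nontangential approach to infinity inside the sector of aperture `C`. -/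
noncomputable def nontangentialFilter (C : ℝ) : Filter ℂ :=
  comap norm atTop ⊓ 𝓟 (nontangentialSector C)

instance (C : ℝ) : (nontangentialFilter C).IsCountablyGenerated := by
  unfold nontangentialFilter; infer_instance

lemma eventually_mem_nontangentialSector (C : ℝ) :
    ∀ᶠ l in nontangentialFilter C, l ∈ nontangentialSector C :=
  mem_inf_of_right (mem_principal_self _)

lemma norm_mul_resolvent_le {C : ℝ} {l : ℂ} (hl : l ∈ nontangentialSector C) (t : ℝ) :
    ‖l * (l - (t : ℂ))⁻¹‖ ≤ C + 1 := by
  obtain ⟨him, hre⟩ := hl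
  have h1 : l.im ≤ ‖l - (t : ℂ)‖ := by
    have h := Complex.abs_im_le_norm (l - (t : ℂ))
    simp only [Complex.sub_im, Complex.ofReal_im, sub_zero] at h
    exact (le_abs_self _).trans h
  have h2 : ‖l‖ ≤ (C + 1) * l.im := by
    have h := Complex.norm_le_abs_re_add_abs_im l
    rw [abs_of_pos him] at h
    linarith
  have hC : 0 ≤ C + 1 := by
    by_contra hneg
    nlinarith [norm_nonneg l]
  rw [norm_mul, norm_inv, ← div_eq_mul_inv, div_le_iff₀ (him.trans_le h1)]
  exact h2.trans (mul_le_mul_of_nonneg_left h1 hC)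

lemma tendsto_mul_resolvent (C t : ℝ) :
    Tendsto (fun l : ℂ => l * (l - (t : ℂ))⁻¹) (nontangentialFilter C) (𝓝 1) := by
  have hinv : Tendsto (fun l : ℂ => l⁻¹) (nontangentialFilter C) (𝓝 0) :=
    tendsto_inv₀_cobounded.mono_left (inf_le_left.trans comap_norm_atTop.le)
  have h : Tendsto (fun l : ℂ => (1 - (t : ℂ) * l⁻¹)⁻¹) (nontangentialFilter C) (𝓝 1) := by
    have h0 := ((hinv.const_mul (t : ℂ)).const_sub 1).inv₀ (by simp)
    simpa using h0
  refine h.congr' ?_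
  filter_upwards [eventually_mem_nontangentialSector C] with l hl
  have hl0 : l ≠ 0 := by
    rintro rfl
    simpa using hl.1
  rw [show (1 : ℂ) - t * l⁻¹ = l⁻¹ * (l - t) by field_simp, mul_inv, inv_inv]

lemma measurable_resolvent (l : ℂ) : Measurable (fun t : ℝ => (l - (t : ℂ))⁻¹) := by
  fun_prop

/-- The Cauchy transform of a probability measure is asymptotic to `l⁻¹` nontangentially. -/
lemma tendsto_mul_cauchyTransform (μ : Measure ℝ) [IsProbabilityMeasure μ] (C : ℝ) :
    Tendsto (fun l : ℂ => l * ∫ s : ℝ, (l - (s : ℂ))⁻¹ ∂μ) (nontangentialFilter C) (𝓝 1) := by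
  have h := tendsto_integral_filter_of_dominated_convergence (μ := μ)
    (F := fun (l : ℂ) (s : ℝ) => l * (l - (s : ℂ))⁻¹) (f := fun _ => (1 : ℂ))
    (l := nontangentialFilter C) (fun _ => C + 1)
    (Eventually.of_forall fun l => ((measurable_resolvent l).const_mul l).aestronglyMeasurable)
    ((eventually_mem_nontangentialSector C).mono fun l hl =>
      Eventually.of_forall (norm_mul_resolvent_le hl))
    (integrable_const _) (Eventually.of_forall (tendsto_mul_resolvent C))
  simpa [integral_const_mul] using h

lemma tendsto_centered_resolvent_variance (μ : Measure ℝ) [IsProbabilityMeasure μ] (C : ℝ) :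
    Tendsto (fun l : ℂ =>
      ‖l‖ ^ 2 * ∫ t : ℝ, ‖(l - (t : ℂ))⁻¹ - ∫ s : ℝ, (l - (s : ℂ))⁻¹ ∂μ‖ ^ 2 ∂μ)
      (nontangentialFilter C) (𝓝 0) := by
  have h := tendsto_integral_filter_of_dominated_convergence (μ := μ)
    (F := fun (l : ℂ) (t : ℝ) =>
      ‖l * (l - (t : ℂ))⁻¹ - l * ∫ s : ℝ, (l - (s : ℂ))⁻¹ ∂μ‖ ^ 2)
    (f := fun _ => (0 : ℝ))
    (l := nontangentialFilter C) (fun _ => (C + 1 + 2) ^ 2)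
    (Eventually.of_forall fun l =>
      ((((measurable_resolvent l).const_mul l).sub_const _).norm.pow_const 2).aestronglyMeasurable)
    (by
      -- Since `l * G_μ(l) → 1`, eventually `‖l * G_μ(l)‖ < 2`.
      filter_upwards [eventually_mem_nontangentialSector C,
        (tendsto_mul_cauchyTransform μ C).norm.eventually_lt_const
          (show ‖(1 : ℂ)‖ < 2 by norm_num)] with l hl hG
      refine Eventually.of_forall fun t => ?_
      rw [norm_pow, norm_norm]
      gcongr
      exact (norm_sub_le _ _).trans (add_le_add (norm_mul_resolvent_le hl t) hG.le))
    (integrable_const _)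
    (Eventually.of_forall fun t => by
      simpa using
        (((tendsto_mul_resolvent C t).sub (tendsto_mul_cauchyTransform μ C)).norm.pow 2))
  simpa [← mul_sub, mul_pow, integral_const_mul] using h

/-- For a Borel probability measure `μ` on `ℝ`,
`|λ|² · ∫ |(λ - t)⁻¹ - G_μ(λ)|² dμ(t) → 0` as `λ → ∞` nontangentially in the upper
half-plane, where `G_μ` is the Cauchy transform of `μ`. -/
theorem centered_resolvent_variance_nontangential_limit
    (μ : Measure ℝ) [IsProbabilityMeasure μ] :
    ∀ C > (0:ℝ), ∀ ε > (0:ℝ), ∃ R > (0:ℝ), ∀ l : ℂ,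
      0 < l.im → R < ‖l‖ → |l.re| ≤ C * l.im →
      ‖l‖^2 * (∫ t : ℝ, ‖(l - (t:ℂ))⁻¹ - ∫ s : ℝ, (l - (s:ℂ))⁻¹ ∂μ‖^2 ∂μ) < ε := by
  intro C _ ε hε
  have h := (tendsto_centered_resolvent_variance μ C).eventually_lt_const hε
  obtain ⟨R, hR, hsub⟩ :=
    ((((atTop_basis_Ioi' (0 : ℝ)).comap (norm : ℂ → ℝ)).inf_principal
      (nontangentialSector C)).eventually_iff).1 h
  exact ⟨R, hR, fun l him hl hre => hsub ⟨hl, him, hre⟩⟩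
end

section
/- Let μ be a Borel probability measure on ℝ whose support has exactly N connected components, where 1 ≤ N < ∞. Then the set {t ∈ ℝ ∖ supp(μ) : G_μ(t) = 0}, where G_μ(t) = ∫_ℝ (t − s)⁻¹ dμ(s), is finite and has at most N − 1 elements; in fact there is at most one such zero in each bounded connected component of ℝ ∖ supp(μ), and none in the unbounded components. -/
/-!
The integrand `(t - s)⁻¹` is bounded almost everywhere when `t` lies outside the support, and
three sign considerations drive the proof. If the support lies on one side of `t`, the integrand
has a constant sign, so `G_μ(t) ≠ 0`: every zero has support points on both sides
(`exists_msupport_gt_of_zero`, `exists_msupport_lt_of_zero`). If `t₁ < t₂` and the support avoids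
`[t₁, t₂]`, then `(t₁ - s)⁻¹ - (t₂ - s)⁻¹ = (t₂ - t₁) / ((t₁ - s) (t₂ - s)) > 0` on the support, so
`G_μ(t₁) > G_μ(t₂)`: two zeros are separated by a support point
(`exists_msupport_between_zeros`).

Hence `k` zeros cut the line into `k + 1` intervals, each of which meets the support. Support
points on opposite sides of a point outside the support lie in different connected components of
the support, so there are at least `k + 1` components (`card_add_one_le_card_components`).
-/

open MeasureTheory

/-- The topological support of a measure: the set of points all of whose neighborhoods
have positive measure. -/
def Measure.msupport {α : Type*} [TopologicalSpace α] {m : MeasurableSpace α}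
    (μ : Measure α) : Set α :=
  {x | ∀ U ∈ nhds x, 0 < μ U}

lemma ae_mem_msupport (μ : Measure ℝ) : ∀ᵐ s ∂μ, s ∈ Measure.msupport μ := by
  have h : Measure.msupport μ = μ.support := by
    ext x
    simp only [Measure.msupport, Set.mem_ofPred_eq, MeasureTheory.Measure.mem_support_iff_forall]
  rw [h]
  exact MeasureTheory.Measure.support_mem_ae

lemma integrable_cauchyKernel (μ : Measure ℝ) [IsProbabilityMeasure μ] {t : ℝ}
    (ht : t ∉ Measure.msupport μ) : Integrable (fun s => (t - s)⁻¹) μ := by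
  simp only [Measure.msupport, Set.mem_ofPred_eq, not_forall, not_lt, nonpos_iff_eq_zero] at ht
  obtain ⟨U, hU, hμU⟩ := ht
  obtain ⟨ε, hε, hball⟩ := Metric.mem_nhds_iff.1 hU
  refine Integrable.of_bound (C := ε⁻¹) (by fun_prop) ?_
  have hnot : ∀ᵐ s ∂μ, s ∉ U := measure_eq_zero_iff_ae_notMem.1 hμU
  filter_upwards [hnot] with s hs
  have h1 : ε ≤ |t - s| := by
    by_contra! h
    refine hs (hball ?_)
    rw [Metric.mem_ball, Real.dist_eq, abs_sub_comm]
    exact h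
  rw [norm_inv, Real.norm_eq_abs]
  exact inv_anti₀ hε h1

lemma integral_ne_zero_of_ae_pos (μ : Measure ℝ) [IsProbabilityMeasure μ] {f : ℝ → ℝ}
    (hf : Integrable f μ) (hpos : ∀ᵐ s ∂μ, 0 < f s) : ∫ s, f s ∂μ ≠ 0 := by
  intro h
  rw [integral_eq_zero_iff_of_nonneg_ae (hpos.mono fun s hs => hs.le) hf] at h
  obtain ⟨s, hs, hs'⟩ := (hpos.and h).exists
  exact hs.ne' hs'

lemma exists_msupport_lt_of_zero (μ : Measure ℝ) [IsProbabilityMeasure μ] {t : ℝ}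
    (ht : t ∉ Measure.msupport μ) (h0 : ∫ s, (t - s)⁻¹ ∂μ = 0) :
    ∃ s ∈ Measure.msupport μ, s < t := by
  by_contra! h
  refine integral_ne_zero_of_ae_pos μ (integrable_cauchyKernel μ ht).neg ?_
    (by simpa [integral_neg] using h0)
  filter_upwards [ae_mem_msupport μ] with s hs
  have h1 : t < s := lt_of_le_of_ne (h s hs) (fun e => ht (e ▸ hs))
  simpa using h1

lemma exists_msupport_gt_of_zero (μ : Measure ℝ) [IsProbabilityMeasure μ] {t : ℝ}
    (ht : t ∉ Measure.msupport μ) (h0 : ∫ s, (t - s)⁻¹ ∂μ = 0) :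
    ∃ s ∈ Measure.msupport μ, t < s := by
  by_contra! h
  refine integral_ne_zero_of_ae_pos μ (integrable_cauchyKernel μ ht) ?_ h0
  filter_upwards [ae_mem_msupport μ] with s hs
  have h1 : s < t := lt_of_le_of_ne (h s hs) (fun e => ht (e ▸ hs))
  simpa using h1

lemma exists_msupport_between_zeros (μ : Measure ℝ) [IsProbabilityMeasure μ] {t₁ t₂ : ℝ}
    (h₁ : t₁ ∉ Measure.msupport μ) (h₁0 : ∫ s, (t₁ - s)⁻¹ ∂μ = 0)
    (h₂ : t₂ ∉ Measure.msupport μ) (h₂0 : ∫ s, (t₂ - s)⁻¹ ∂μ = 0) (hlt : t₁ < t₂) :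
    ∃ s ∈ Measure.msupport μ, t₁ < s ∧ s < t₂ := by
  by_contra! h
  have i₁ := integrable_cauchyKernel μ h₁
  have i₂ := integrable_cauchyKernel μ h₂
  refine integral_ne_zero_of_ae_pos μ (i₁.sub i₂) ?_
    (by simp only [Pi.sub_apply]; rw [integral_sub i₁ i₂, h₁0, h₂0, sub_zero])
  filter_upwards [ae_mem_msupport μ] with s hs
  have n₁ : s ≠ t₁ := fun e => h₁ (e ▸ hs)
  have n₂ : s ≠ t₂ := fun e => h₂ (e ▸ hs)
  have hprod : 0 < (t₁ - s) * (t₂ - s) := by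
    rcases lt_or_gt_of_ne n₁ with hs1 | hs1
    · exact mul_pos (by linarith) (by linarith)
    · have := lt_of_le_of_ne (h s hs hs1) n₂.symm
      exact mul_pos_of_neg_of_neg (by linarith) (by linarith)
  have e : (t₁ - s)⁻¹ - (t₂ - s)⁻¹ = (t₂ - t₁) / ((t₁ - s) * (t₂ - s)) := by
    have := sub_ne_zero.2 n₁.symm
    have := sub_ne_zero.2 n₂.symm
    field_simp
    ring
  simp only [Pi.sub_apply]
  rw [e]
  exact div_pos (by linarith) hprod

/-- A point outside `S` separates the connected components of `S` on its two sides. -/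
lemma components_ne_of_separated {S : Set ℝ} {a b : S} {t : ℝ} (ht : t ∉ S)
    (hat : (a : ℝ) < t) (htb : t < b) :
    (a : ConnectedComponents S) ≠ (b : ConnectedComponents S) := by
  intro h
  rw [ConnectedComponents.coe_eq_coe] at h
  have hpre : IsPreconnected ((↑) '' connectedComponent a : Set ℝ) :=
    isPreconnected_connectedComponent.image _ continuous_subtype_val.continuousOn
  have ha : (a : ℝ) ∈ ((↑) '' connectedComponent a : Set ℝ) :=
    ⟨a, mem_connectedComponent, rfl⟩
  have hb : (b : ℝ) ∈ ((↑) '' connectedComponent a : Set ℝ) :=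
    ⟨b, h ▸ mem_connectedComponent, rfl⟩
  obtain ⟨c, -, hc⟩ := hpre.ordConnected.out ha hb ⟨hat.le, htb.le⟩
  exact ht (hc ▸ c.2)

/-- If every point of a finite set `F` outside `S` has points of `S` on both sides, and `S` meets
the gap between any two points of `F`, then `S` has more components than `F` has points. -/
lemma card_add_one_le_card_components {S : Set ℝ} [Finite (ConnectedComponents S)]
    (hS : S.Nonempty) (F : Finset ℝ) (hF : ∀ t ∈ F, t ∉ S)
    (hleft : ∀ t ∈ F, ∃ s ∈ S, s < t) (hright : ∀ t ∈ F, ∃ s ∈ S, t < s)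
    (hmid : ∀ t₁ ∈ F, ∀ t₂ ∈ F, t₁ < t₂ → ∃ s ∈ S, t₁ < s ∧ s < t₂) :
    F.card + 1 ≤ Nat.card (ConnectedComponents S) := by
  -- A point of `S` just to the left of `x`: to the right of all smaller elements of `F`.
  have hl : ∀ x : F, ∃ s : S, (s : ℝ) < x ∧ ∀ y ∈ F, y < x → y < s := by
    rintro ⟨x, hx⟩
    rcases (F.filter (· < x)).eq_empty_or_nonempty with he | hne
    · obtain ⟨s, hs, hsx⟩ := hleft x hx
      refine ⟨⟨s, hs⟩, hsx, fun y hy hyx => ?_⟩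
      exact absurd hyx (Finset.filter_eq_empty_iff.1 he hy)
    · have hm := Finset.max'_mem _ hne
      rw [Finset.mem_filter] at hm
      obtain ⟨s, hs, hms, hsx⟩ := hmid _ hm.1 x hx hm.2
      refine ⟨⟨s, hs⟩, hsx, fun y hy hyx => lt_of_le_of_lt ?_ hms⟩
      exact Finset.le_max' _ _ (Finset.mem_filter.2 ⟨hy, hyx⟩)
  have hr : ∃ s : S, ∀ y ∈ F, y < s := by
    rcases F.eq_empty_or_nonempty with rfl | hne
    · exact ⟨⟨hS.some, hS.some_mem⟩, by simp⟩
    · obtain ⟨s, hs, hms⟩ := hright _ (F.max'_mem hne)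
      exact ⟨⟨s, hs⟩, fun y hy => lt_of_le_of_lt (F.le_max' y hy) hms⟩
  choose l hlx hly using hl
  obtain ⟨r, hr⟩ := hr
  -- `none` stands for the rightmost of the `F.card + 1` intervals cut out by `F`.
  let φ : Option F → ConnectedComponents S := fun o => o.elim (r : ConnectedComponents S)
    (fun x => (l x : ConnectedComponents S))
  have hφ : Function.Injective φ := by
    rintro (_ | x) (_ | y) h
    · rfl
    · exact absurd h.symm (components_ne_of_separated (hF y y.2) (hlx y) (hr y y.2))
    · exact absurd h (components_ne_of_separated (hF x x.2) (hlx x) (hr x x.2))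
    · rcases lt_trichotomy (x : ℝ) y with hxy | hxy | hxy
      · exact absurd h (components_ne_of_separated (hF x x.2) (hlx x) (hly y x x.2 hxy))
      · rw [Subtype.ext hxy]
      · exact absurd h.symm (components_ne_of_separated (hF y y.2) (hlx y) (hly x y y.2 hxy))
  have := Nat.card_le_card_of_injective φ hφ
  simpa using this

/-- If the support of a Borel probability measure `μ` on `ℝ` has exactly `N` connected
components (`1 ≤ N < ∞`), then the set of zeros of the Cauchy transform `G_μ` outside the
support is finite, has at most `N - 1` elements, contains at most one point in each connected
component of the complement of the support, and all these components are bounded. -/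
theorem cauchyTransform_zeros_count
    (μ : Measure ℝ) [IsProbabilityMeasure μ] (N : ℕ) (hN : 1 ≤ N)
    (hfin : Finite (ConnectedComponents ↥(Measure.msupport μ)))
    (hcard : Nat.card (ConnectedComponents ↥(Measure.msupport μ)) = N) :
    {t : ℝ | t ∉ Measure.msupport μ ∧ (∫ s, (t - s)⁻¹ ∂μ) = 0}.Finite ∧
    Nat.card {t : ℝ | t ∉ Measure.msupport μ ∧ (∫ s, (t - s)⁻¹ ∂μ) = 0} ≤ N - 1 ∧
    (∀ t₁ ∈ {t : ℝ | t ∉ Measure.msupport μ ∧ (∫ s, (t - s)⁻¹ ∂μ) = 0},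
     ∀ t₂ ∈ {t : ℝ | t ∉ Measure.msupport μ ∧ (∫ s, (t - s)⁻¹ ∂μ) = 0},
      connectedComponentIn (Measure.msupport μ)ᶜ t₁ =
        connectedComponentIn (Measure.msupport μ)ᶜ t₂ → t₁ = t₂) ∧
    (∀ t ∈ {t : ℝ | t ∉ Measure.msupport μ ∧ (∫ s, (t - s)⁻¹ ∂μ) = 0},
      Bornology.IsBounded (connectedComponentIn (Measure.msupport μ)ᶜ t)) := by
  have hF : ∀ F : Finset ℝ,
      (F : Set ℝ) ⊆ {t : ℝ | t ∉ Measure.msupport μ ∧ (∫ s, (t - s)⁻¹ ∂μ) = 0} →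
        F.card + 1 ≤ N := by
    intro F hFZ
    rw [← hcard]
    exact card_add_one_le_card_components (ae_mem_msupport μ).exists F
      (fun t ht => (hFZ ht).1)
      (fun t ht => exists_msupport_lt_of_zero μ (hFZ ht).1 (hFZ ht).2)
      (fun t ht => exists_msupport_gt_of_zero μ (hFZ ht).1 (hFZ ht).2)
      (fun t₁ h₁ t₂ h₂ hlt => exists_msupport_between_zeros μ (hFZ h₁).1 (hFZ h₁).2
        (hFZ h₂).1 (hFZ h₂).2 hlt)
  have hZ : {t : ℝ | t ∉ Measure.msupport μ ∧ (∫ s, (t - s)⁻¹ ∂μ) = 0}.Finite := by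
    by_contra hinf
    obtain ⟨F, hFZ, hFc⟩ := Set.Infinite.exists_subset_card_eq hinf N
    have := hF F hFZ
    omega
  -- Components of the complement are intervals that miss the support.
  have hord : ∀ t a b c : ℝ, a ∈ connectedComponentIn (Measure.msupport μ)ᶜ t →
      b ∈ connectedComponentIn (Measure.msupport μ)ᶜ t → a ≤ c → c ≤ b →
      c ∉ Measure.msupport μ := fun t a b c ha hb hac hcb =>
    connectedComponentIn_subset _ _
      (isPreconnected_connectedComponentIn.ordConnected.out ha hb ⟨hac, hcb⟩)
  refine ⟨hZ, ?_, ?_, ?_⟩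
  · have h := hF hZ.toFinset (by simp)
    rw [Nat.card_coe_set_eq, Set.ncard_eq_toFinset_card _ hZ]
    omega
  · rintro t₁ ⟨h₁, h₁0⟩ t₂ ⟨h₂, h₂0⟩ heq
    have m₁ := mem_connectedComponentIn (F := (Measure.msupport μ)ᶜ) h₁
    have m₂ := mem_connectedComponentIn (F := (Measure.msupport μ)ᶜ) h₂
    rw [← heq] at m₂
    rcases lt_trichotomy t₁ t₂ with hlt | he | hlt
    · obtain ⟨s, hs, hs1, hs2⟩ := exists_msupport_between_zeros μ h₁ h₁0 h₂ h₂0 hlt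
      exact absurd hs (hord _ _ _ s m₁ m₂ hs1.le hs2.le)
    · exact he
    · obtain ⟨s, hs, hs1, hs2⟩ := exists_msupport_between_zeros μ h₂ h₂0 h₁ h₁0 hlt
      exact absurd hs (hord _ _ _ s m₂ m₁ hs1.le hs2.le)
  · rintro t ⟨ht, ht0⟩
    have m := mem_connectedComponentIn (F := (Measure.msupport μ)ᶜ) ht
    obtain ⟨a, ha, hat⟩ := exists_msupport_lt_of_zero μ ht ht0
    obtain ⟨b, hb, htb⟩ := exists_msupport_gt_of_zero μ ht ht0
    refine (Metric.isBounded_Icc a b).subset fun y hy => ⟨?_, ?_⟩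
    · by_contra! hya
      exact hord _ _ _ a hy m hya.le hat.le ha
    · by_contra! hby
      exact hord _ _ _ b m hy htb.le hby.le hb
end

section
/- Let μ be a Borel probability measure on ℝ that is not a Dirac point mass, with supp(μ) ⊆ [α, +∞) for some α ∈ ℝ. Then, on the interval (−∞, α): (1) G_μ(t) = ∫_ℝ (t − s)⁻¹ dμ(s) < 0, so F_μ = 1/G_μ is real-valued and smooth there; (2) F_μ″(t) > 0 for all t < α, so F_μ′ is strictly increasing on (−∞, α); (3) F_μ′(t) > 1 for all t < α; and (4) lim_{t → −∞} F_μ′(t) = 1. -/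
/-!
Write `I k t = ∫ (t - s)⁻¹ ^ k dμ(s)` (`cauchyMoment`), so that `G = I 1`. Since `μ` lives on
`[α, ∞)`, the integrand is bounded locally uniformly in `t < α`, and differentiation under the
integral sign gives `I k' = -k * I (k + 1)`. Hence every `I k` is smooth on `(-∞, α)`, and
`F = 1 / I 1` satisfies `F' = I 2 / (I 1)²` and `F'' = 2 ((I 2)² - I 1 * I 3) / (I 1)³`.

Two strict Cauchy–Schwarz inequalities finish the pointwise claims: `(I 1)² < I 2` is the strict
positivity of the variance of `v = (t - s)⁻¹`, and `(I 2)² < I 1 * I 3` comes from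
`∫ (-v) (v - c)² dμ > 0` with `c = I 2 / I 1`. Equality in either would force `v`, hence `s`, to be
almost surely constant, i.e. `μ` to be a point mass.

For the limit, dominated convergence gives `t ^ k * I k t → 1` as `t → -∞`, so that
`F' = (t² * I 2) / (t * I 1)² → 1`.
-/

open MeasureTheory

open Filter Topology Set

/-- The integral of the `k`-th power of the Cauchy kernel, `∫ (t - s)⁻¹ ^ k dμ(s)`. -/
noncomputable def cauchyMoment (μ : Measure ℝ) (k : ℕ) (t : ℝ) : ℝ := ∫ s, ((t - s)⁻¹) ^ k ∂μ

lemma ae_le_of_msupport_subset_Ici {μ : Measure ℝ} {α : ℝ}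
    (hsupp : Measure.msupport μ ⊆ Ici α) : ∀ᵐ s ∂μ, α ≤ s := by
  have h0 : μ (Iio α) = 0 := by
    refine measure_null_of_locally_null _ fun x hx => ?_
    have hx' : x ∉ Measure.msupport μ := fun h => not_le.2 (mem_Iio.1 hx) (hsupp h)
    simp only [Measure.msupport, mem_ofPred_eq, not_forall, not_lt, nonpos_iff_eq_zero] at hx'
    obtain ⟨U, hU, hU0⟩ := hx'
    exact ⟨U, mem_nhdsWithin_of_mem_nhds hU, hU0⟩
  rw [ae_iff]
  convert h0 using 2
  ext s
  simp

lemma not_ae_eq_const {μ : Measure ℝ} [IsProbabilityMeasure μ]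
    (hnd : ∀ c : ℝ, μ ≠ Measure.dirac c) (c : ℝ) : ¬ ∀ᵐ s ∂μ, s = c := by
  intro h
  apply hnd c
  have h1 : Measure.map (fun s : ℝ => s) μ = Measure.map (fun _ => c) μ := Measure.map_congr h
  rw [Measure.map_const, measure_univ, one_smul] at h1
  simpa using h1

lemma measurable_kernel (k : ℕ) (t : ℝ) : Measurable fun s : ℝ => ((t - s)⁻¹) ^ k := by
  fun_prop

lemma abs_kernel_le {t s ε : ℝ} (hε : 0 < ε) (h : ε ≤ s - t) (k : ℕ) :
    |((t - s)⁻¹) ^ k| ≤ (ε⁻¹) ^ k := by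
  rw [abs_pow, abs_inv, abs_sub_comm, abs_of_pos (hε.trans_le h)]
  have := hε.trans_le h
  gcongr

section
variable {μ : Measure ℝ} [IsProbabilityMeasure μ] {α t : ℝ}

lemma integrable_kernel (hα : ∀ᵐ s ∂μ, α ≤ s) (ht : t < α) (k : ℕ) :
    Integrable (fun s : ℝ => ((t - s)⁻¹) ^ k) μ := by
  refine Integrable.of_bound (measurable_kernel k t).aestronglyMeasurable (((α - t)⁻¹) ^ k) ?_
  filter_upwards [hα] with s hs
  exact abs_kernel_le (sub_pos.2 ht) (by linarith) k

lemma hasDerivAt_cauchyMoment (hα : ∀ᵐ s ∂μ, α ≤ s) (ht : t < α) (k : ℕ) :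
    HasDerivAt (cauchyMoment μ k) (-k * cauchyMoment μ (k + 1) t) t := by
  have hε : 0 < (α - t) / 2 := by linarith
  have key := hasDerivAt_integral_of_dominated_loc_of_deriv_le (μ := μ)
    (F := fun x s : ℝ => ((x - s)⁻¹) ^ k) (F' := fun x s : ℝ => -k * ((x - s)⁻¹) ^ (k + 1))
    (x₀ := t) (s := Metric.ball t ((α - t) / 2))
    (bound := fun _ => k * (((α - t) / 2)⁻¹) ^ (k + 1)) (Metric.ball_mem_nhds t hε)
    (Eventually.of_forall fun x => (measurable_kernel k x).aestronglyMeasurable)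
    (integrable_kernel hα ht k)
    ((measurable_kernel (k + 1) t).const_mul _).aestronglyMeasurable
    (by
      filter_upwards [hα] with s hs x hx
      rw [Metric.mem_ball, Real.dist_eq, abs_lt] at hx
      rw [Real.norm_eq_abs, abs_mul, abs_neg, Nat.abs_cast]
      exact mul_le_mul_of_nonneg_left (abs_kernel_le hε (by linarith) _) k.cast_nonneg)
    (integrable_const _)
    (by
      filter_upwards [hα] with s hs x hx
      rw [Metric.mem_ball, Real.dist_eq, abs_lt] at hx
      have hne : x - s ≠ 0 := by linarith
      have h := (((hasDerivAt_id x).sub_const s).inv hne).pow k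
      refine h.congr_deriv ?_
      rcases k with _ | k
      · simp
      · simp only [id, Nat.add_sub_cancel]
        simp [field]
        ring)
  have h2 := key.2
  rw [integral_const_mul] at h2
  exact h2

lemma contDiffOn_cauchyMoment (hα : ∀ᵐ s ∂μ, α ≤ s) (n : ℕ) :
    ∀ k : ℕ, ContDiffOn ℝ n (cauchyMoment μ k) (Iio α) := by
  induction n with
  | zero =>
    intro k
    simp only [Nat.cast_zero, contDiffOn_zero]
    exact fun t ht => (hasDerivAt_cauchyMoment hα ht k).continuousAt.continuousWithinAt
  | succ n ih =>
    intro k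
    push_cast
    rw [contDiffOn_succ_iff_deriv_of_isOpen isOpen_Iio]
    refine ⟨fun t ht =>
      (hasDerivAt_cauchyMoment hα ht k).differentiableAt.differentiableWithinAt, by simp, ?_⟩
    exact (contDiffOn_const.mul (ih (k + 1))).congr
      fun t ht => (hasDerivAt_cauchyMoment hα ht k).deriv

/-- An a.e. positive weight times `(v - c)²`, with `v = (t - s)⁻¹`, has positive integral because `v`
is an injective function of `s` and `μ` is not a point mass. -/
lemma integral_weighted_sq_pos (hnd : ∀ c : ℝ, μ ≠ Measure.dirac c) {w : ℝ → ℝ} (c : ℝ)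
    (hw : ∀ᵐ s ∂μ, 0 < w s) (hint : Integrable (fun s => w s * ((t - s)⁻¹ - c) ^ 2) μ) :
    0 < ∫ s, w s * ((t - s)⁻¹ - c) ^ 2 ∂μ := by
  have hnn : 0 ≤ᵐ[μ] fun s => w s * ((t - s)⁻¹ - c) ^ 2 := by
    filter_upwards [hw] with s hs
    simp only [Pi.zero_apply]
    positivity
  refine lt_of_le_of_ne (integral_nonneg_of_ae hnn) fun h => ?_
  have h0 := (integral_eq_zero_iff_of_nonneg_ae hnn hint).1 h.symm
  refine not_ae_eq_const hnd (t - c⁻¹) ?_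
  filter_upwards [h0, hw] with s hs hws
  have hs' : (t - s)⁻¹ - c = 0 := by
    simpa [hws.ne'] using hs
  rw [← sub_eq_zero.1 hs', inv_inv]
  ring

lemma cauchyMoment_one_neg (hα : ∀ᵐ s ∂μ, α ≤ s) (ht : t < α) : cauchyMoment μ 1 t < 0 := by
  have hpos : ∀ᵐ s ∂μ, 0 < -((t - s)⁻¹) ^ 1 := by
    filter_upwards [hα] with s hs
    simp only [pow_one, Left.neg_pos_iff, inv_lt_zero]
    linarith
  have h : 0 < ∫ s, -((t - s)⁻¹) ^ 1 ∂μ := by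
    have hnn : 0 ≤ᵐ[μ] fun s => -((t - s)⁻¹) ^ 1 := hpos.mono fun s hs => hs.le
    refine lt_of_le_of_ne (integral_nonneg_of_ae hnn) fun h => ?_
    have h0 := (integral_eq_zero_iff_of_nonneg_ae hnn (integrable_kernel hα ht 1).neg).1 h.symm
    obtain ⟨s, hs, hs0⟩ := (hpos.and h0).exists
    exact hs.ne' hs0
  rw [integral_neg] at h
  exact neg_pos.1 h

lemma sq_cauchyMoment_one_lt (hα : ∀ᵐ s ∂μ, α ≤ s) (hnd : ∀ c : ℝ, μ ≠ Measure.dirac c)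
    (ht : t < α) : cauchyMoment μ 1 t ^ 2 < cauchyMoment μ 2 t := by
  set c := cauchyMoment μ 1 t with hc
  have i1 := integrable_kernel hα ht 1
  have i2 := integrable_kernel hα ht 2
  have e : (fun s => (1 : ℝ) * ((t - s)⁻¹ - c) ^ 2)
      = fun s => ((t - s)⁻¹) ^ 2 - (2 * c) * ((t - s)⁻¹) ^ 1 + c ^ 2 := by
    funext s; ring
  have i3 : Integrable (fun s => ((t - s)⁻¹) ^ 2 - (2 * c) * ((t - s)⁻¹) ^ 1) μ :=
    i2.sub (i1.const_mul (2 * c))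
  have hpos := integral_weighted_sq_pos (t := t) hnd (w := fun _ => 1) c (by simp)
    (by rw [e]; exact i3.add (integrable_const _))
  rw [e, integral_add i3 (integrable_const _), integral_sub i2 (i1.const_mul _),
    integral_const_mul] at hpos
  change 0 < cauchyMoment μ 2 t - 2 * c * cauchyMoment μ 1 t + _ at hpos
  rw [← hc] at hpos
  simp at hpos
  nlinarith

lemma sq_cauchyMoment_two_lt (hα : ∀ᵐ s ∂μ, α ≤ s) (hnd : ∀ c : ℝ, μ ≠ Measure.dirac c)
    (ht : t < α) :
    cauchyMoment μ 2 t ^ 2 < cauchyMoment μ 1 t * cauchyMoment μ 3 t := by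
  have hneg := cauchyMoment_one_neg hα ht
  set c := cauchyMoment μ 2 t / cauchyMoment μ 1 t with hc
  have i1 := integrable_kernel hα ht 1
  have i2 := integrable_kernel hα ht 2
  have i3 := integrable_kernel hα ht 3
  have e : (fun s => -(t - s)⁻¹ * ((t - s)⁻¹ - c) ^ 2)
      = fun s => (2 * c) * ((t - s)⁻¹) ^ 2 - ((t - s)⁻¹) ^ 3 - c ^ 2 * ((t - s)⁻¹) ^ 1 := by
    funext s; ring
  have i4 : Integrable (fun s => (2 * c) * ((t - s)⁻¹) ^ 2 - ((t - s)⁻¹) ^ 3) μ :=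
    (i2.const_mul (2 * c)).sub i3
  have hw : ∀ᵐ s ∂μ, 0 < -(t - s)⁻¹ := by
    filter_upwards [hα] with s hs
    simp only [Left.neg_pos_iff, inv_lt_zero]
    linarith
  have hpos := integral_weighted_sq_pos (t := t) hnd c hw
    (by rw [e]; exact i4.sub (i1.const_mul _))
  rw [e, integral_sub i4 (i1.const_mul _), integral_sub (i2.const_mul _) i3,
    integral_const_mul, integral_const_mul] at hpos
  change 0 < 2 * c * cauchyMoment μ 2 t - cauchyMoment μ 3 t - c ^ 2 * cauchyMoment μ 1 t at hpos
  have hcm : c * cauchyMoment μ 1 t = cauchyMoment μ 2 t := div_mul_cancel₀ _ hneg.ne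
  have h2 := mul_neg_of_neg_of_pos hneg hpos
  have h3 : cauchyMoment μ 1 t *
      (2 * c * cauchyMoment μ 2 t - cauchyMoment μ 3 t - c ^ 2 * cauchyMoment μ 1 t)
      = cauchyMoment μ 2 t ^ 2 - cauchyMoment μ 1 t * cauchyMoment μ 3 t := by
    linear_combination (2 * cauchyMoment μ 2 t - c * cauchyMoment μ 1 t - cauchyMoment μ 2 t) * hcm
  linarith

lemma hasDerivAt_inv_cauchyMoment (hα : ∀ᵐ s ∂μ, α ≤ s) (ht : t < α) :
    HasDerivAt (fun t => (cauchyMoment μ 1 t)⁻¹)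
      (cauchyMoment μ 2 t / cauchyMoment μ 1 t ^ 2) t := by
  have h := (hasDerivAt_cauchyMoment hα ht 1).inv (cauchyMoment_one_neg hα ht).ne
  refine h.congr_deriv ?_
  simp

lemma hasDerivAt_deriv_inv_cauchyMoment (hα : ∀ᵐ s ∂μ, α ≤ s) (ht : t < α) :
    HasDerivAt (deriv fun t => (cauchyMoment μ 1 t)⁻¹)
      (2 * (cauchyMoment μ 2 t ^ 2 - cauchyMoment μ 1 t * cauchyMoment μ 3 t)
        / cauchyMoment μ 1 t ^ 3) t := by
  have hne := (cauchyMoment_one_neg hα ht).ne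
  have h := (hasDerivAt_cauchyMoment hα ht 2).div ((hasDerivAt_cauchyMoment hα ht 1).pow 2)
    (pow_ne_zero 2 hne)
  have heq : (deriv fun t => (cauchyMoment μ 1 t)⁻¹)
      =ᶠ[𝓝 t] (cauchyMoment μ 2 / cauchyMoment μ 1 ^ 2) := by
    filter_upwards [Iio_mem_nhds ht] with x hx
    exact (hasDerivAt_inv_cauchyMoment hα hx).deriv
  refine (h.congr_of_eventuallyEq heq).congr_deriv ?_
  simp only [Pi.pow_apply]
  norm_num
  field_simp
  ring

lemma tendsto_pow_mul_cauchyMoment (hα : ∀ᵐ s ∂μ, α ≤ s) (k : ℕ) :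
    Tendsto (fun t => t ^ k * cauchyMoment μ k t) atBot (𝓝 1) := by
  have h : Tendsto (fun t => ∫ s, t ^ k * ((t - s)⁻¹) ^ k ∂μ) atBot (𝓝 (∫ _, (1 : ℝ) ∂μ)) := by
    refine tendsto_integral_filter_of_dominated_convergence (fun _ => (2 : ℝ) ^ k)
      (Eventually.of_forall fun t => ((measurable_kernel k t).const_mul _).aestronglyMeasurable)
      ?_ (integrable_const _) ?_
    -- For `t < -2|α|` and `s ≥ α` one has `s - t ≥ |t| / 2`.
    · filter_upwards [eventually_lt_atBot (-(2 * |α|))] with t ht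
      have hα0 := abs_nonneg α
      have hα1 := neg_abs_le α
      have ht0 : t < 0 := by linarith
      filter_upwards [hα] with s hs
      have hd : 0 < s - t := by linarith
      rw [← mul_pow, norm_pow, Real.norm_eq_abs, abs_mul, abs_inv, abs_sub_comm t s,
        abs_of_pos hd, abs_of_neg ht0]
      refine pow_le_pow_left₀ (mul_nonneg (by linarith) (inv_nonneg.2 hd.le)) ?_ k
      rw [← div_eq_mul_inv, div_le_iff₀ hd]
      linarith
    · refine Eventually.of_forall fun s => ?_
      have h1 : Tendsto (fun t : ℝ => 1 + s * (t - s)⁻¹) atBot (𝓝 (1 + s * 0)) :=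
        ((tendsto_inv_atBot_zero.comp (tendsto_atBot_add_const_right _ (-s) tendsto_id)).const_mul
          s).const_add 1
      have h2 : Tendsto (fun t : ℝ => t * (t - s)⁻¹) atBot (𝓝 1) := by
        rw [mul_zero, add_zero] at h1
        refine h1.congr' ?_
        filter_upwards [eventually_lt_atBot s] with t ht
        have : t - s ≠ 0 := by linarith
        field_simp
        ring
      simpa [mul_pow] using h2.pow k
  simpa [integral_const_mul, cauchyMoment] using h

end

/-- If `μ` is a Borel probability measure on `ℝ`, not a point mass, supported in `[α, ∞)`,
then on `(-∞, α)`: the Cauchy transform `G_μ` is negative (so `F_μ = 1/G_μ` is real-valued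
and smooth there), `F_μ'' > 0` (so `F_μ'` is strictly increasing), `F_μ' > 1`, and
`F_μ'(t) → 1` as `t → -∞`. -/
theorem reciprocal_cauchyTransform_convexity_left_of_support
    (μ : Measure ℝ) [IsProbabilityMeasure μ] (α : ℝ)
    (hsupp : Measure.msupport μ ⊆ Set.Ici α)
    (hnd : ∀ c : ℝ, μ ≠ Measure.dirac c) :
    (∀ t < α, (∫ s, (t - s)⁻¹ ∂μ) < 0) ∧
    ContDiffOn ℝ (⊤ : ℕ∞) (fun t : ℝ => (∫ s, (t - s)⁻¹ ∂μ)⁻¹) (Set.Iio α) ∧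
    (∀ t < α, 0 < deriv (deriv (fun t : ℝ => (∫ s, (t - s)⁻¹ ∂μ)⁻¹)) t) ∧
    StrictMonoOn (deriv (fun t : ℝ => (∫ s, (t - s)⁻¹ ∂μ)⁻¹)) (Set.Iio α) ∧
    (∀ t < α, 1 < deriv (fun t : ℝ => (∫ s, (t - s)⁻¹ ∂μ)⁻¹) t) ∧
    Filter.Tendsto (deriv (fun t : ℝ => (∫ s, (t - s)⁻¹ ∂μ)⁻¹)) Filter.atBot (nhds 1) := by
  have hα := ae_le_of_msupport_subset_Ici hsupp
  have hG : (fun t : ℝ => ∫ s, (t - s)⁻¹ ∂μ) = cauchyMoment μ 1 := by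
    funext t
    simp [cauchyMoment]
  have hF : (fun t : ℝ => (∫ s, (t - s)⁻¹ ∂μ)⁻¹) = fun t => (cauchyMoment μ 1 t)⁻¹ := by
    rw [← hG]
  rw [hF]
  have hd2 : ∀ t < α, 0 < deriv (deriv fun t => (cauchyMoment μ 1 t)⁻¹) t := by
    intro t ht
    rw [(hasDerivAt_deriv_inv_cauchyMoment hα ht).deriv]
    refine div_pos_of_neg_of_neg ?_ (Odd.pow_neg (by decide) (cauchyMoment_one_neg hα ht))
    linarith [sq_cauchyMoment_two_lt hα hnd ht]
  refine ⟨fun t ht => ?_, ?_, hd2, ?_, fun t ht => ?_, ?_⟩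
  · rw [congrFun hG t]
    exact cauchyMoment_one_neg hα ht
  · refine ContDiffOn.inv ?_ fun t ht => (cauchyMoment_one_neg hα ht).ne
    exact contDiffOn_infty.2 fun n => contDiffOn_cauchyMoment hα n 1
  · refine strictMonoOn_of_deriv_pos (convex_Iio α)
      (fun t ht =>
        (hasDerivAt_deriv_inv_cauchyMoment hα ht).continuousAt.continuousWithinAt) ?_
    rw [interior_Iio]
    exact hd2
  · have hne := (cauchyMoment_one_neg hα ht).ne
    rw [(hasDerivAt_inv_cauchyMoment hα ht).deriv, one_lt_div (by positivity)]
    exact sq_cauchyMoment_one_lt hα hnd ht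
  · have h := (tendsto_pow_mul_cauchyMoment hα 2).div
      ((tendsto_pow_mul_cauchyMoment hα 1).pow 2) (by norm_num)
    rw [one_pow, div_one] at h
    refine h.congr' ?_
    filter_upwards [eventually_lt_atBot α, eventually_lt_atBot 0] with t ht ht0
    have hne := (cauchyMoment_one_neg hα ht).ne
    rw [(hasDerivAt_inv_cauchyMoment hα ht).deriv]
    simp only [Pi.div_apply, pow_one]
    rw [mul_pow, mul_div_mul_left _ _ (pow_ne_zero 2 ht0.ne)]
end

section
/- Let μ be a Borel probability measure on ℝ₊ = [0, +∞) with μ ≠ δ₀, and let x ∈ ℝ ∖ {0} be such that 1/x ∉ supp(μ). Then the function ψ_μ, given on a neighborhood of x by ψ_μ(s) = ∫_{ℝ₊} st/(1 − st) dμ(t), is differentiable at x with ψ_μ′(x) = ∫_{ℝ₊} t/(1 − tx)² dμ(t), and this derivative is strictly positive. -/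
/-!
Since `x⁻¹` has a null neighbourhood, there is `c > 0` with `c * (1 + |t|) ≤ |1 - x * t|` for
almost every `t` (`exists_lower_bound`): near `x⁻¹` nothing has to be checked, and at infinity
`|1 - x * t|` grows like `|x| * |t|` because `x ≠ 0`. The linear growth makes the bound stable: for
`|s - x| < c / 2` it persists with `c / 2` in place of `c`. Hence `s * t / (1 - s * t)` is bounded
at `s = x`, its `s`-derivative `t / (1 - t * s) ^ 2` is bounded by `(2 / c) ^ 2` uniformly for `s`
near `x`, and constants are integrable for a probability measure, so one may differentiate under the
integral sign. The resulting integrand is nonnegative on the support; if its integral vanished, then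
`t = 0` almost everywhere, i.e. `μ = δ₀`.
-/

open MeasureTheory

/-- Outside a null set, `|1 - x * t|` is bounded away from zero and grows linearly in `t`. -/
lemma exists_lower_bound (μ : Measure ℝ) (x : ℝ) (hx : x ≠ 0)
    (hxs : x⁻¹ ∉ Measure.msupport μ) :
    ∃ c : ℝ, 0 < c ∧ ∀ᵐ t ∂μ, c * (1 + |t|) ≤ |1 - x * t| := by
  simp only [Measure.msupport, Set.mem_ofPred_eq, not_forall, not_lt, nonpos_iff_eq_zero] at hxs
  obtain ⟨U, hU, hU0⟩ := hxs
  obtain ⟨ε, hε, hball⟩ := Metric.mem_nhds_iff.1 hU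
  have hK : 0 < (1 + |x⁻¹|) / ε + 1 := by positivity
  refine ⟨|x| / ((1 + |x⁻¹|) / ε + 1), by positivity, ?_⟩
  filter_upwards [measure_eq_zero_iff_ae_notMem.1 hU0] with t ht
  have hd : ε ≤ |t - x⁻¹| := by
    by_contra! h
    exact ht (hball (by simpa [Real.dist_eq] using h))
  have h1 : |1 - x * t| = |x| * |t - x⁻¹| := by
    rw [← abs_mul, mul_sub, mul_inv_cancel₀ hx, abs_sub_comm]
  have h2 : |t| ≤ |t - x⁻¹| + |x⁻¹| := by simpa using abs_add_le (t - x⁻¹) x⁻¹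
  have h3 : 1 + |x⁻¹| ≤ (1 + |x⁻¹|) / ε * |t - x⁻¹| := by
    rw [div_mul_eq_mul_div, le_div_iff₀ hε]
    gcongr
  rw [h1, div_mul_eq_mul_div, div_le_iff₀ hK, mul_assoc]
  gcongr
  linarith

lemma lower_bound_nearby {c x s t : ℝ} (hs : |s - x| < c / 2)
    (h : c * (1 + |t|) ≤ |1 - x * t|) : c / 2 * (1 + |t|) ≤ |1 - s * t| := by
  have h1 : |1 - x * t| ≤ |1 - s * t| + |(s - x) * t| := by
    have := abs_add_le (1 - s * t) ((s - x) * t)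
    rwa [show 1 - s * t + (s - x) * t = 1 - x * t by ring] at this
  have h2 : |(s - x) * t| ≤ c / 2 * |t| := by
    rw [abs_mul]
    gcongr
  have := (abs_nonneg (s - x)).trans_lt hs
  linarith

lemma eq_dirac_zero_of_ae (μ : Measure ℝ) [IsProbabilityMeasure μ]
    (h : ∀ᵐ t ∂μ, t = 0) : μ = Measure.dirac 0 := by
  have h1 : μ.map id = μ.map (fun _ => (0 : ℝ)) := Measure.map_congr h
  simpa [Measure.map_const] using h1

/-- For a Borel probability measure `μ` on `ℝ₊` different from `δ₀` and `x ≠ 0` with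
`1/x ∉ supp(μ)`, the function `ψ_μ(s) = ∫ st/(1-st) dμ(t)` is differentiable at `x` with
`ψ_μ'(x) = ∫ t/(1-tx)² dμ(t) > 0`. -/
theorem psi_deriv_pos
    (μ : Measure ℝ) [IsProbabilityMeasure μ]
    (hpos : Measure.msupport μ ⊆ Set.Ici 0)
    (hnd : μ ≠ Measure.dirac 0)
    (x : ℝ) (hx : x ≠ 0) (hxs : x⁻¹ ∉ Measure.msupport μ) :
    HasDerivAt (fun s : ℝ => ∫ t, s * t / (1 - s * t) ∂μ)
      (∫ t, t / (1 - t * x)^2 ∂μ) x ∧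
    0 < ∫ t, t / (1 - t * x)^2 ∂μ := by
  obtain ⟨c, hc, hbd⟩ := exists_lower_bound μ x hx hxs
  have hnonneg : ∀ᵐ t ∂μ, 0 ≤ t := by
    filter_upwards [μ.support_mem_ae] with t ht
    exact hpos ((μ.mem_support_iff_forall t).1 ht)
  have hF_int : Integrable (fun t => x * t / (1 - x * t)) μ := by
    refine Integrable.of_bound (C := |x| / c) (Measurable.aestronglyMeasurable (by fun_prop)) ?_
    filter_upwards [hbd] with t ht
    have hp : 0 < |1 - x * t| := lt_of_lt_of_le (by positivity) ht
    rw [Real.norm_eq_abs, abs_div, abs_mul, div_le_div_iff₀ hp hc, mul_assoc]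
    gcongr
    nlinarith
  have key := hasDerivAt_integral_of_dominated_loc_of_deriv_le (μ := μ) (x₀ := x)
    (F := fun s t : ℝ => s * t / (1 - s * t)) (F' := fun s t : ℝ => t / (1 - t * s) ^ 2)
    (bound := fun _ => (2 / c) ^ 2) (Metric.ball_mem_nhds x (half_pos hc))
    (Filter.Eventually.of_forall fun s => Measurable.aestronglyMeasurable (by fun_prop)) hF_int
    (Measurable.aestronglyMeasurable (by fun_prop))
    (by
      filter_upwards [hbd] with t ht s hs
      have hl := lower_bound_nearby (by simpa [Real.dist_eq] using hs) ht
      have hp : 0 < c / 2 * (1 + |t|) := by positivity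
      rw [mul_comm t s, Real.norm_eq_abs, abs_div, abs_pow]
      calc |t| / |1 - s * t| ^ 2 ≤ |t| / (c / 2 * (1 + |t|)) ^ 2 := by gcongr
        _ ≤ (2 / c) ^ 2 := by
          rw [div_le_iff₀ (by positivity)]
          have : (2 / c) ^ 2 * (c / 2 * (1 + |t|)) ^ 2 = (1 + |t|) ^ 2 := by
            field_simp
          rw [this]
          nlinarith [abs_nonneg t])
    (integrable_const _)
    (by
      filter_upwards [hbd] with t ht s hs
      have hl := lower_bound_nearby (by simpa [Real.dist_eq] using hs) ht
      have hp : 0 < |1 - s * t| := lt_of_lt_of_le (by positivity) hl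
      have hne : 1 - s * t ≠ 0 := abs_pos.1 hp
      have h1 : HasDerivAt (fun s : ℝ => s * t) t s := by
        simpa using (hasDerivAt_id s).mul_const t
      refine (h1.div (h1.const_sub 1) hne).congr_deriv ?_
      rw [mul_comm t s]
      congr 1
      ring)
  refine ⟨key.2, ?_⟩
  have h0 : 0 ≤ᵐ[μ] fun t => t / (1 - t * x) ^ 2 := by
    filter_upwards [hnonneg] with t ht
    exact div_nonneg ht (sq_nonneg _)
  refine lt_of_le_of_ne (integral_nonneg_of_ae h0) fun h => hnd (eq_dirac_zero_of_ae μ ?_)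
  filter_upwards [(integral_eq_zero_iff_of_nonneg_ae h0 key.1).1 h.symm, hbd] with t ht hl
  have hp : 0 < |1 - x * t| := lt_of_lt_of_le (by positivity) hl
  have hne : 1 - t * x ≠ 0 := by rw [mul_comm]; exact abs_pos.1 hp
  simpa [hne] using ht
end

section
/- Let μ be a Borel probability measure on ℝ₊ = [0, +∞) and let λ ∈ ℂ ∖ {0} be such that 1/λ ∉ supp(μ) and ψ_μ(λ) ≠ −1, where ψ_μ(λ) = ∫_{ℝ₊} λt/(1 − λt) dμ(t). Set m₁ = ∫_{ℝ₊} (1 − λt)⁻¹ dμ(t) and m₂ = ∫_{ℝ₊} (1 − λt)⁻² dμ(t), and define k_μ(z) = η_μ(z)/z with η_μ = ψ_μ/(1 + ψ_μ). Then k_μ is complex-differentiable at λ and k_μ′(λ) = (m₂ − m₁²) / (λ²·(ψ_μ(λ) + 1)²). -/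
/-!
Since `supp μ` is closed and misses `1/λ`, the quantity `‖1 - λt‖` is bounded below by a positive
constant and also by a positive multiple of `|t|` on `supp μ`; both bounds persist, uniformly,
for `z` in a small ball around `λ` (`exists_uniform_bound`). As `supp μ` is conull, this makes
`t / (1 - zt)²`, the `z`-derivative of `zt / (1 - zt)`, uniformly bounded, and `ψ_μ` can be
differentiated under the integral sign (`hasDerivAt_psi`). The identities
`λt/(1-λt) = (1-λt)⁻¹ - 1` and `λt/(1-λt)² = (1-λt)⁻² - (1-λt)⁻¹` integrate to
`ψ_μ(λ) = m₁ - 1` and `λ ψ_μ'(λ) = m₂ - m₁`, and the quotient rule gives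
`k_μ'(λ) = (λ ψ_μ' - ψ_μ (1 + ψ_μ)) / (λ² (1 + ψ_μ)²) = (m₂ - m₁²) / (λ² (1 + ψ_μ)²)`.
-/

open MeasureTheory

lemma msupport_eq_support (μ : Measure ℝ) : Measure.msupport μ = μ.support := by
  ext x
  rw [MeasureTheory.Measure.mem_support_iff_forall]
  rfl

/-- Uniform lower bounds on `‖1 - zt‖` for `z` near `lam` and `t` in a closed set avoiding
`1 / lam`. The bound by a multiple of `|t|` is what controls `t → ∞`. -/
lemma exists_uniform_bound (S : Set ℝ) (hS : IsClosed S) (lam : ℂ) (hlam : lam ≠ 0)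
    (hs : ∀ t ∈ S, (t : ℂ) ≠ lam⁻¹) :
    ∃ c > 0, ∃ ε > 0, ∀ t ∈ S, ∀ z ∈ Metric.ball lam ε,
      c ≤ ‖1 - z * (t : ℂ)‖ ∧ ε * |t| ≤ ‖1 - z * (t : ℂ)‖ := by
  have hcl : IsClosed ((fun t : ℝ => (t : ℂ)) '' S) :=
    Complex.isometry_ofReal.isClosedEmbedding.isClosedMap _ hS
  have hmem : lam⁻¹ ∈ ((fun t : ℝ => (t : ℂ)) '' S)ᶜ := by
    rintro ⟨t, ht, h⟩
    exact hs t ht h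
  obtain ⟨r, hr, hball⟩ := Metric.isOpen_iff.1 hcl.isOpen_compl _ hmem
  have hl : 0 < ‖lam‖ := norm_pos_iff.2 hlam
  set c : ℝ := ‖lam‖ * r with hc
  have hcpos : 0 < c := mul_pos hl hr
  set ε : ℝ := ‖lam‖ * c / (2 * (1 + c)) with hε
  have hεpos : 0 < ε := by positivity
  refine ⟨c / 2, by positivity, ε, hεpos, fun t ht z hz => ?_⟩
  have h1 : c ≤ ‖1 - lam * (t : ℂ)‖ := by
    have hd : r ≤ ‖(t : ℂ) - lam⁻¹‖ := by
      by_contra! h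
      exact hball (by rwa [Metric.mem_ball, dist_eq_norm]) ⟨t, ht, rfl⟩
    have he : 1 - lam * (t : ℂ) = -(lam * ((t : ℂ) - lam⁻¹)) := by
      field_simp
      ring
    rw [he, norm_neg, norm_mul]
    exact mul_le_mul_of_nonneg_left hd hl.le
  have h2 : ‖lam‖ * |t| ≤ 1 + ‖1 - lam * (t : ℂ)‖ := by
    have := norm_sub_le (1 : ℂ) (1 - lam * (t : ℂ))
    rwa [sub_sub_cancel, norm_mul, Complex.norm_real, Real.norm_eq_abs, norm_one] at this
  have h3 : 2 * ε * |t| ≤ ‖1 - lam * (t : ℂ)‖ := by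
    have e : 2 * ε * |t| = c * (‖lam‖ * |t|) / (1 + c) := by
      rw [hε]
      field_simp
    rw [e, div_le_iff₀ (by positivity)]
    nlinarith [mul_le_mul_of_nonneg_left h2 hcpos.le]
  have h4 : ‖1 - lam * (t : ℂ)‖ - ε * |t| ≤ ‖1 - z * (t : ℂ)‖ := by
    have h := norm_sub_norm_le (1 - lam * (t : ℂ)) (1 - z * (t : ℂ))
    have e : 1 - lam * (t : ℂ) - (1 - z * (t : ℂ)) = (z - lam) * t := by ring
    rw [e, norm_mul, Complex.norm_real, Real.norm_eq_abs] at h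
    rw [Metric.mem_ball, dist_eq_norm] at hz
    nlinarith [mul_le_mul_of_nonneg_right hz.le (abs_nonneg t)]
  constructor <;> linarith

/-- Differentiation of `ψ_μ` under the integral sign, together with the integrability facts
needed to express `ψ_μ(lam)` and `ψ_μ'(lam)` through `m₁` and `m₂`. -/
lemma hasDerivAt_psi (μ : Measure ℝ) [IsProbabilityMeasure μ] (lam : ℂ) (hlam : lam ≠ 0)
    (hs : ∀ t ∈ Measure.msupport μ, (t : ℂ) ≠ lam⁻¹) :
    (∀ᵐ t : ℝ ∂μ, 1 - lam * (t : ℂ) ≠ 0) ∧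
    Integrable (fun t : ℝ => (1 - lam * (t : ℂ))⁻¹) μ ∧
    Integrable (fun t : ℝ => (t : ℂ) / (1 - lam * t) ^ 2) μ ∧
    HasDerivAt (fun z : ℂ => ∫ t : ℝ, z * t / (1 - z * t) ∂μ)
      (∫ t : ℝ, (t : ℂ) / (1 - lam * t) ^ 2 ∂μ) lam := by
  rw [msupport_eq_support] at hs
  obtain ⟨c, hc, ε, hε, H⟩ :=
    exists_uniform_bound μ.support MeasureTheory.Measure.isClosed_support lam hlam hs
  have hae : ∀ᵐ t : ℝ ∂μ, t ∈ μ.support := MeasureTheory.Measure.support_mem_ae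
  have hball : lam ∈ Metric.ball lam ε := Metric.mem_ball_self hε
  have hne : ∀ t ∈ μ.support, ∀ z ∈ Metric.ball lam ε, 1 - z * (t : ℂ) ≠ 0 :=
    fun t ht z hz => norm_pos_iff.1 (hc.trans_le (H t ht z hz).1)
  have hne' : ∀ᵐ t : ℝ ∂μ, 1 - lam * (t : ℂ) ≠ 0 := hae.mono fun t ht => hne t ht lam hball
  have hinv : Integrable (fun t : ℝ => (1 - lam * (t : ℂ))⁻¹) μ := by
    refine Integrable.of_bound (by fun_prop) (c⁻¹) (hae.mono fun t ht => ?_)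
    rw [norm_inv]
    exact inv_anti₀ hc (H t ht lam hball).1
  have hint : Integrable (fun t : ℝ => lam * (t : ℂ) / (1 - lam * t)) μ := by
    refine (hinv.sub (integrable_const (1 : ℂ))).congr (hne'.mono fun t ht => ?_)
    simp only [Pi.sub_apply]
    field_simp
    ring
  have key := hasDerivAt_integral_of_dominated_loc_of_deriv_le (μ := μ)
    (F := fun (z : ℂ) (t : ℝ) => z * (t : ℂ) / (1 - z * t))
    (F' := fun (z : ℂ) (t : ℝ) => (t : ℂ) / (1 - z * t) ^ 2)
    (bound := fun _ => ε⁻¹ * c⁻¹)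
    (Metric.ball_mem_nhds lam hε)
    (Filter.Eventually.of_forall fun z =>
      (by fun_prop : Measurable fun t : ℝ => z * (t : ℂ) / (1 - z * t)).aestronglyMeasurable)
    hint
    (by fun_prop : Measurable fun t : ℝ => (t : ℂ) / (1 - lam * t) ^ 2).aestronglyMeasurable
    (hae.mono fun t ht z hz => by
      obtain ⟨h1, h2⟩ := H t ht z hz
      have hp : 0 < ‖1 - z * (t : ℂ)‖ := hc.trans_le h1
      rw [norm_div, norm_pow, Complex.norm_real, Real.norm_eq_abs, ← mul_inv, ← one_div,
        div_le_div_iff₀ (by positivity) (by positivity)]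
      nlinarith [mul_le_mul h2 h1 hc.le hp.le])
    (integrable_const _)
    (hae.mono fun t ht z hz => by
      have h0 := hne t ht z hz
      have hn : HasDerivAt (fun z : ℂ => z * (t : ℂ)) (t : ℂ) z := by
        simpa using (hasDerivAt_id z).mul_const (t : ℂ)
      refine (hn.div (hn.const_sub 1) h0).congr_deriv ?_
      congr 1
      ring)
  exact ⟨hne', hinv, key.1, key.2⟩

/-- Derivative of `k_μ = η_μ(z)/z` where `η_μ = ψ_μ/(1+ψ_μ)` and
`ψ_μ(z) = ∫ zt/(1-zt) dμ(t)`, for a probability measure `μ` on `ℝ₊`, at a point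
`λ ≠ 0` with `1/λ ∉ supp(μ)` and `ψ_μ(λ) ≠ -1`:
`k_μ'(λ) = (m₂ - m₁²)/(λ²(ψ_μ(λ)+1)²)` with `m₁ = ∫ (1-λt)⁻¹ dμ`, `m₂ = ∫ (1-λt)⁻² dμ`. -/
theorem k_deriv_formula
    (μ : Measure ℝ) [IsProbabilityMeasure μ]
    (hpos : Measure.msupport μ ⊆ Set.Ici 0)
    (lam : ℂ) (hlam : lam ≠ 0)
    (hs : ∀ t ∈ Measure.msupport μ, (t : ℂ) ≠ lam⁻¹)
    (hpsi : (∫ t : ℝ, lam * t / (1 - lam * t) ∂μ) ≠ -1) :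
    HasDerivAt
      (fun z : ℂ =>
        ((∫ t : ℝ, z * t / (1 - z * t) ∂μ) / (1 + ∫ t : ℝ, z * t / (1 - z * t) ∂μ)) / z)
      (((∫ t : ℝ, ((1 - lam * t : ℂ)^2)⁻¹ ∂μ) - (∫ t : ℝ, (1 - lam * t : ℂ)⁻¹ ∂μ)^2) /
        (lam^2 * ((∫ t : ℝ, lam * t / (1 - lam * t) ∂μ) + 1)^2)) lam := by
  obtain ⟨hne, hinv, hint, hd⟩ := hasDerivAt_psi μ lam hlam hs
  have hm1 : (∫ t : ℝ, lam * t / (1 - lam * t) ∂μ) = (∫ t : ℝ, (1 - lam * t : ℂ)⁻¹ ∂μ) - 1 := by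
    have e : (∫ t : ℝ, lam * t / (1 - lam * t) ∂μ) = ∫ t : ℝ, ((1 - lam * t : ℂ)⁻¹ - 1) ∂μ := by
      refine integral_congr_ae (hne.mono fun t ht => ?_)
      simp only
      field_simp
      ring
    rw [e, integral_sub hinv (integrable_const _)]
    simp
  have hm2 : (∫ t : ℝ, ((1 - lam * t : ℂ)^2)⁻¹ ∂μ) =
      (∫ t : ℝ, (1 - lam * t : ℂ)⁻¹ ∂μ) + lam * ∫ t : ℝ, (t : ℂ) / (1 - lam * t) ^ 2 ∂μ := by
    rw [← integral_const_mul, ← integral_add hinv (hint.const_mul lam)]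
    refine integral_congr_ae (hne.mono fun t ht => ?_)
    simp only
    field_simp
    ring
  have hψ : 1 + (∫ t : ℝ, lam * t / (1 - lam * t) ∂μ) ≠ 0 := fun h =>
    hpsi (eq_neg_of_add_eq_zero_right h)
  refine ((hd.div (hd.const_add 1) hψ).div (hasDerivAt_id lam) hlam).congr_deriv ?_
  simp only [Pi.div_apply, id_eq]
  rw [hm2]
  rw [hm1] at hψ ⊢
  generalize (∫ t : ℝ, (1 - lam * t : ℂ)⁻¹ ∂μ) = m at *
  have hm : m ≠ 0 := by simpa using hψ
  rw [sub_add_cancel, add_sub_cancel]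
  field_simp
  ring_nf
end

section
/- Let A be a unital algebra over ℂ, let y₁, y₂ ∈ A be such that 1 − y₁ and 1 − y₂ are invertible, and let β ∈ ℂ with β ≠ 0 and β ≠ 1. Then (1 − y₁) · [1 − (1/(β(β−1))) · ((1 − y₁)⁻¹ − β·1) · ((1 − y₂)⁻¹ − β·1)] · (1 − y₂) = (1/β) · (1 − (β/(β−1)) · y₁y₂). Consequently, 1 − (β/(β−1))·y₁y₂ is invertible if and only if 1 − (1/(β(β−1)))·((1 − y₁)⁻¹ − β·1)·((1 − y₂)⁻¹ − β·1) is invertible. -/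
/-! The factor `1 - y₁` is absorbed into `(1 - y₁)⁻¹ - β`, giving `(1 - β) + β y₁`, and `1 - y₂` is
absorbed symmetrically on the right. No inverse remains, and both sides agree as linear combinations
of `1, y₁, y₂, y₁y₂`. The equivalence follows because multiplying by units on either side, or by the
nonzero scalar `β⁻¹`, does not affect invertibility. -/

/-- Haagerup's multiplicative identity: if `1 - y₁` and `1 - y₂` are invertible in a unital
complex algebra and `β ∈ ℂ \ {0, 1}`, then
`(1-y₁)·[1 - (β(β-1))⁻¹((1-y₁)⁻¹ - β)((1-y₂)⁻¹ - β)]·(1-y₂) = β⁻¹(1 - (β/(β-1))y₁y₂)`;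
consequently `1 - (β/(β-1))y₁y₂` is invertible iff
`1 - (β(β-1))⁻¹((1-y₁)⁻¹ - β)((1-y₂)⁻¹ - β)` is invertible. -/
theorem haagerup_multiplicative_identity
    {A : Type*} [Ring A] [Algebra ℂ A] (y₁ y₂ : A) (β : ℂ)
    (hβ0 : β ≠ 0) (hβ1 : β ≠ 1)
    (h₁ : IsUnit (1 - y₁)) (h₂ : IsUnit (1 - y₂)) :
    ((1 - y₁) *
        (1 - (β * (β - 1))⁻¹ •
          ((Ring.inverse (1 - y₁) - β • (1 : A)) * (Ring.inverse (1 - y₂) - β • (1 : A)))) *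
        (1 - y₂)
      = β⁻¹ • (1 - (β / (β - 1)) • (y₁ * y₂))) ∧
    (IsUnit (1 - (β / (β - 1)) • (y₁ * y₂)) ↔
      IsUnit (1 - (β * (β - 1))⁻¹ •
        ((Ring.inverse (1 - y₁) - β • (1 : A)) * (Ring.inverse (1 - y₂) - β • (1 : A))))) := by
  have hβ1' : β - 1 ≠ 0 := sub_ne_zero.mpr hβ1
  have identity : (1 - y₁) *
        (1 - (β * (β - 1))⁻¹ •
          ((Ring.inverse (1 - y₁) - β • (1 : A)) * (Ring.inverse (1 - y₂) - β • (1 : A)))) *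
        (1 - y₂)
      = β⁻¹ • (1 - (β / (β - 1)) • (y₁ * y₂)) := by
    have left : (1 - y₁) * (Ring.inverse (1 - y₁) - β • (1 : A)) = (1 - β) • (1 : A) + β • y₁ := by
      rw [mul_sub, Ring.mul_inverse_cancel _ h₁, mul_smul_comm, mul_one]
      module
    have right : (Ring.inverse (1 - y₂) - β • (1 : A)) * (1 - y₂) = (1 - β) • (1 : A) + β • y₂ := by
      rw [sub_mul, Ring.inverse_mul_cancel _ h₂, smul_mul_assoc, one_mul]
      module
    rw [mul_assoc, sub_mul 1 (_ • _), one_mul, mul_sub (1 - y₁) (1 - y₂), smul_mul_assoc,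
      mul_smul_comm, mul_assoc, right, ← mul_assoc, left]
    simp only [mul_add, add_mul, mul_sub, sub_mul, smul_mul_assoc, mul_smul_comm, mul_one, one_mul]
    match_scalars <;> field_simp <;> ring
  refine ⟨identity, ?_⟩
  have scalar : IsUnit (β⁻¹ • (1 - (β / (β - 1)) • (y₁ * y₂))) ↔
      IsUnit (1 - (β / (β - 1)) • (y₁ * y₂)) :=
    isUnit_smul_iff (Units.mk0 β⁻¹ (inv_ne_zero hβ0)) _
  rw [← scalar, ← identity]
  obtain ⟨u, hu⟩ := h₁
  obtain ⟨v, hv⟩ := h₂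
  rw [← hu, ← hv, Units.isUnit_mul_units, Units.isUnit_units_mul]
end
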